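/- Let L, N be a lightlike frame along the unit-speed spacelike curve γ̂ with first component L₀(0) of L(0) nonzero, and set δ_L(u) = ⟨L(u), L(0)/L₀(0)⟩. If α_L^{(l)}(0) = 0 for l = 0, …, k, then δ_L^{(l+1)}(0) = 0 for l = 0, …, k. -/

import Mathlib

open scoped Topology

noncomputable section

/-- Points/vectors of Lorentz–Minkowski 3-space `ℝ³₁`. -/
abbrev R3 : Type := Fin 3 → ℝ

/-- The Lorentz–Minkowski scalar product `⟨x,y⟩ = -x₀y₀ + x₁y₁ + x₂y₂`. -/
def mink (x y : R3) : ℝ := -(x 0 * y 0) + x 1 * y 1 + x 2 * y 2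

/-- `(L, N)` is a lightlike frame along the unit-speed spacelike curve `γ` on `I`:
`γ, L, N` are smooth on `I`, `⟨e,e⟩ = 1` (with `e = γ'`), `⟨e,L⟩ = ⟨e,N⟩ = 0`,
`⟨L,L⟩ = ⟨N,N⟩ = 0` and `⟨L,N⟩ = 1` on `I`. -/
structure LightlikeFrame (I : Set ℝ) (γ L N : ℝ → R3) : Prop where
  smooth_gamma : ContDiffOn ℝ (⊤ : ℕ∞) γ I
  smooth_L : ContDiffOn ℝ (⊤ : ℕ∞) L I
  smooth_N : ContDiffOn ℝ (⊤ : ℕ∞) N I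
  unit_speed : ∀ u ∈ I, mink (deriv γ u) (deriv γ u) = 1
  eL : ∀ u ∈ I, mink (deriv γ u) (L u) = 0
  eN : ∀ u ∈ I, mink (deriv γ u) (N u) = 0
  LL : ∀ u ∈ I, mink (L u) (L u) = 0
  NN : ∀ u ∈ I, mink (N u) (N u) = 0
  LN : ∀ u ∈ I, mink (L u) (N u) = 1

/-- `α_L = ⟨γ'', L⟩`. -/
def alphaL (γ L : ℝ → R3) (u : ℝ) : ℝ := mink (deriv (deriv γ) u) (L u)

/-- `α_N = ⟨γ'', N⟩`. -/
def alphaN (γ N : ℝ → R3) (u : ℝ) : ℝ := mink (deriv (deriv γ) u) (N u)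

/-- `α_G = ⟨L, N'⟩`. -/
def alphaG (L N : ℝ → R3) (u : ℝ) : ℝ := mink (L u) (deriv N u)

/-- `σ_L = α_L' + α_L α_G`. -/
def sigmaL (γ L N : ℝ → R3) (u : ℝ) : ℝ :=
  deriv (alphaL γ L) u + alphaL γ L u * alphaG L N u

/-- `σ_N = α_N' - α_N α_G`. -/
def sigmaN (γ L N : ℝ → R3) (u : ℝ) : ℝ :=
  deriv (alphaN γ N) u - alphaN γ N u * alphaG L N u

/-- If the derivatives of `f` up to order `n` vanish at `x`, so does the `n`-th derivative of
`f * g`. -/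
lemma iteratedDeriv_mul_eq_zero {f g : ℝ → ℝ} {x : ℝ} {n : ℕ} (hf : ContDiffAt ℝ n f x)
    (hg : ContDiffAt ℝ n g x) (h : ∀ i ≤ n, iteratedDeriv i f x = 0) :
    iteratedDeriv n (f * g) x = 0 := by
  rw [iteratedDeriv_mul hf hg]
  refine Finset.sum_eq_zero fun i hi => ?_
  rw [h i (Nat.lt_succ_iff.mp (Finset.mem_range.mp hi)), mul_zero, zero_mul]

/-- If `y' = α f + y c` near `x`, `y x = 0` and `α` vanishes to order `k` at `x`, then `y` vanishes
to order `k + 1` at `x`. -/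
lemma iteratedDeriv_eq_zero_of_linear_ode {y α f c : ℝ → ℝ} {x : ℝ} {k : ℕ}
    (hy : ∀ n : ℕ, ContDiffAt ℝ n y x) (hα : ∀ n : ℕ, ContDiffAt ℝ n α x)
    (hf : ∀ n : ℕ, ContDiffAt ℝ n f x) (hc : ∀ n : ℕ, ContDiffAt ℝ n c x)
    (hode : deriv y =ᶠ[𝓝 x] α * f + y * c) (hyx : y x = 0)
    (hαx : ∀ l ≤ k, iteratedDeriv l α x = 0) :
    ∀ l ≤ k + 1, iteratedDeriv l y x = 0 := by
  intro l
  induction l using Nat.strong_induction_on with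
  | _ l ih =>
    intro hl
    cases l with
    | zero => simpa using hyx
    | succ m =>
      rw [iteratedDeriv_succ', hode.iteratedDeriv_eq m,
        iteratedDeriv_add (f := α * f) (g := y * c) ((hα m).mul (hf m)) ((hy m).mul (hc m)),
        iteratedDeriv_mul_eq_zero (hα m) (hf m) fun i hi => hαx i (by omega),
        iteratedDeriv_mul_eq_zero (hy m) (hc m) fun i hi => ih i (by omega) (by omega), add_zero]

/-- Expansion of a vector in a lightlike frame `e, l, n`. -/
lemma eq_lightlike_expansion {e l n : R3} (hee : mink e e = 1) (hel : mink e l = 0)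
    (hen : mink e n = 0) (hll : mink l l = 0) (hnn : mink n n = 0) (hln : mink l n = 1) (x : R3) :
    x = mink x e • e + mink x n • l + mink x l • n := by
  have hgram : !![-e 0, e 1, e 2; -l 0, l 1, l 2; -n 0, n 1, n 2] *
      !![e 0, n 0, l 0; e 1, n 1, l 1; e 2, n 2, l 2] = (1 : Matrix (Fin 3) (Fin 3) ℝ) := by
    simp only [mink] at *
    ext i j
    fin_cases i <;> fin_cases j <;>
      simp [Matrix.mul_apply, Fin.sum_univ_three] <;> linarith
  have hdual := congrArg (fun A => A.mulVec x) (mul_eq_one_comm.mp hgram)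
  simp only [Matrix.one_mulVec, ← Matrix.mulVec_mulVec] at hdual
  ext i
  have hi := congrFun hdual i
  fin_cases i <;>
    simp [Matrix.mulVec, dotProduct, Fin.sum_univ_three, mink] at hi ⊢ <;> linarith

lemma mink_comm (x y : R3) : mink x y = mink y x := by
  simp only [mink]; ring

lemma HasDerivAt.mink {f g : ℝ → R3} {f' g' : R3} {u : ℝ} (hf : HasDerivAt f f' u)
    (hg : HasDerivAt g g' u) :
    HasDerivAt (fun t => mink (f t) (g t)) (mink f' (g u) + mink (f u) g') u := by
  rw [hasDerivAt_pi] at hf hg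
  refine ((((hf 0).mul (hg 0)).neg.add ((hf 1).mul (hg 1))).add
    ((hf 2).mul (hg 2))).congr_deriv ?_
  simp only [_root_.mink]; ring

lemma ContDiffAt.mink {f g : ℝ → R3} {u : ℝ} {n : WithTop ℕ∞} (hf : ContDiffAt ℝ n f u)
    (hg : ContDiffAt ℝ n g u) : ContDiffAt ℝ n (fun t => mink (f t) (g t)) u := by
  rw [contDiffAt_pi] at hf hg
  exact (((hf 0).mul (hg 0)).neg.add ((hf 1).mul (hg 1))).add ((hf 2).mul (hg 2))

/-- The derivative of `L` along a lightlike frame: `L' = -α_L e + ⟨L', N⟩ L`. -/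
lemma LightlikeFrame.deriv_L {I : Set ℝ} {γ L N : ℝ → R3} (h : LightlikeFrame I γ L N)
    (hI : IsOpen I) {u : ℝ} (hu : u ∈ I) :
    deriv L u = -alphaL γ L u • deriv γ u + mink (deriv L u) (N u) • L u := by
  have hL : HasDerivAt L (deriv L u) u :=
    ((h.smooth_L.contDiffAt (hI.mem_nhds hu)).differentiableAt (by simp)).hasDerivAt
  have he : HasDerivAt (deriv γ) (deriv (deriv γ) u) u :=
    (((h.smooth_gamma.deriv_of_isOpen (m := (⊤ : ℕ∞)) hI (by simp)).contDiffAt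
      (hI.mem_nhds hu)).differentiableAt (by simp)).hasDerivAt
  have hLL : mink (deriv L u) (L u) + mink (L u) (deriv L u) = 0 :=
    (hL.mink hL).unique ((hasDerivAt_const u (0 : ℝ)).congr_of_eventuallyEq
      (Filter.eventuallyEq_of_mem (hI.mem_nhds hu) h.LL))
  have heL : mink (deriv (deriv γ) u) (L u) + mink (deriv γ u) (deriv L u) = 0 :=
    (he.mink hL).unique ((hasDerivAt_const u (0 : ℝ)).congr_of_eventuallyEq
      (Filter.eventuallyEq_of_mem (hI.mem_nhds hu) h.eL))
  have hL' : mink (deriv L u) (L u) = 0 := by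
    rw [mink_comm (L u)] at hLL; linarith
  have he' : mink (deriv L u) (deriv γ u) = -alphaL γ L u := by
    rw [mink_comm, alphaL]; linarith
  have hexp := eq_lightlike_expansion (h.unit_speed u hu) (h.eL u hu) (h.eN u hu) (h.LL u hu)
    (h.NN u hu) (h.LN u hu) (deriv L u)
  rwa [hL', he', zero_smul, add_zero] at hexp

/-- With `δ_L(u) = ⟨L(u), L(0)/L₀(0)⟩`: if `α_L⁽ˡ⁾(0) = 0` for
`l = 0, …, k`, then `δ_L⁽ˡ⁺¹⁾(0) = 0` for `l = 0, …, k`. -/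
theorem delta_derivatives_vanish (a b : ℝ) (γ L N : ℝ → R3)
    (hframe : LightlikeFrame (Set.Ioo a b) γ L N)
    (h0 : (0 : ℝ) ∈ Set.Ioo a b) (hL0 : L 0 0 ≠ 0) (k : ℕ)
    (hα : ∀ l ≤ k, deriv^[l] (alphaL γ L) 0 = 0) :
    ∀ l ≤ k, deriv^[l + 1] (fun u => mink (L u) ((L 0 0)⁻¹ • L 0)) 0 = 0 := by
  have hI : IsOpen (Set.Ioo a b) := isOpen_Ioo
  have hmem := hI.mem_nhds h0
  set v : R3 := (L 0 0)⁻¹ • L 0 with hv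
  have hγ' := hframe.smooth_gamma.deriv_of_isOpen (m := (⊤ : ℕ∞)) hI (by simp)
  have hγ'' := hγ'.deriv_of_isOpen (m := (⊤ : ℕ∞)) hI (by simp)
  have hL' := hframe.smooth_L.deriv_of_isOpen (m := (⊤ : ℕ∞)) hI (by simp)
  have smooth : ∀ {f : ℝ → R3}, ContDiffOn ℝ (⊤ : ℕ∞) f (Set.Ioo a b) →
      ∀ n : ℕ, ContDiffAt ℝ n f 0 := fun hf n =>
    (hf.contDiffAt hmem).of_le (by exact_mod_cast le_top)
  have hode : deriv (fun u => mink (L u) v) =ᶠ[𝓝 0] alphaL γ L * (fun u => -mink (deriv γ u) v) +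
      (fun u => mink (L u) v) * fun u => mink (deriv L u) (N u) := by
    filter_upwards [hmem] with u hu
    have hL : HasDerivAt L (deriv L u) u :=
      ((hframe.smooth_L.contDiffAt (hI.mem_nhds hu)).differentiableAt (by simp)).hasDerivAt
    rw [(hL.mink (hasDerivAt_const u v)).deriv]
    conv_lhs => rw [hframe.deriv_L hI hu]
    simp only [mink, Pi.add_apply, Pi.mul_apply, Pi.smul_apply, Pi.zero_apply, smul_eq_mul]
    ring
  have hδ : mink (L 0) v = 0 := by
    have hLL := hframe.LL 0 h0
    simp only [mink] at hLL
    simp only [hv, mink, Pi.smul_apply, smul_eq_mul]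
    linear_combination (L 0 0)⁻¹ * hLL
  intro l hl
  rw [← iteratedDeriv_eq_iterate]
  exact iteratedDeriv_eq_zero_of_linear_ode (k := k)
    (fun n => (smooth hframe.smooth_L n).mink contDiffAt_const)
    (fun n => (smooth hγ'' n).mink (smooth hframe.smooth_L n))
    (fun n => ((smooth hγ' n).mink contDiffAt_const).neg)
    (fun n => (smooth hL' n).mink (smooth hframe.smooth_N n)) hode hδ
    (fun i hi => by rw [iteratedDeriv_eq_iterate]; exact hα i hi) (l + 1) (by omega)
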